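/- Let n ≥ 3, let 1 ≤ m < n, and let k ≥ 1. Let F(k) be the subgroup of SL_n(ℤ) generated by U⁺(kℤ), U⁻(kℤ) and M(kℤ). Then F(k) is Zariski dense in SL_n in the following sense: every polynomial f with rational coefficients in the n² matrix entries which vanishes at every element of F(k) vanishes at every element of SL_n(ℚ). -/

import Mathlib

open Matrix

/-- `U⁺(kℤ)`: matrices `I + X` in `SL_n(ℤ)` with `X` supported in the top-right
`m × (n−m)` block and all entries of `X` divisible by `k`. -/
def Uplus (n m k : ℕ) : Set (Matrix.SpecialLinearGroup (Fin n) ℤ) :=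
  {g | ∀ i j : Fin n, if i = j then g.1 i j = 1
      else if (i : ℕ) < m ∧ m ≤ (j : ℕ) then (k : ℤ) ∣ g.1 i j
      else g.1 i j = 0}

/-- `U⁻(kℤ)`: matrices `I + X` in `SL_n(ℤ)` with `X` supported in the bottom-left
`(n−m) × m` block and all entries of `X` divisible by `k`. -/
def Uminus (n m k : ℕ) : Set (Matrix.SpecialLinearGroup (Fin n) ℤ) :=
  {g | ∀ i j : Fin n, if i = j then g.1 i j = 1
      else if m ≤ (i : ℕ) ∧ (j : ℕ) < m then (k : ℤ) ∣ g.1 i j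
      else g.1 i j = 0}

/-- `M(kℤ)`: block diagonal matrices `diag(A, B)` in `SL_n(ℤ)` with `A ∈ SL_m(ℤ)`,
`B ∈ SL_{n−m}(ℤ)`, and both `A` and `B` congruent to the identity mod `k`. -/
def Mblock (n m k : ℕ) (h : m ≤ n) : Set (Matrix.SpecialLinearGroup (Fin n) ℤ) :=
  {g | (∀ i j : Fin n, ¬((i : ℕ) < m ↔ (j : ℕ) < m) → g.1 i j = 0) ∧
       (∀ i j : Fin n, (k : ℤ) ∣ (g.1 i j - if i = j then 1 else 0)) ∧
       (Matrix.of fun i j : Fin m => g.1 (Fin.castLE h i) (Fin.castLE h j)).det = 1 ∧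
       (Matrix.of fun i j : Fin (n - m) =>
          g.1 ⟨m + (i : ℕ), by have := i.2; omega⟩ ⟨m + (j : ℕ), by have := j.2; omega⟩).det = 1}

/-- `F(k)`: the subgroup of `SL_n(ℤ)` generated by `U⁺(kℤ)`, `U⁻(kℤ)` and `M(kℤ)`. -/
def Fgroup (n m k : ℕ) (h : m ≤ n) : Subgroup (Matrix.SpecialLinearGroup (Fin n) ℤ) :=
  Subgroup.closure (Uplus n m k ∪ Uminus n m k ∪ Mblock n m k h)

/-- A subgroup of `SL_n(ℤ)` is a congruence subgroup if it contains a principal congruence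
subgroup `SL_n(Nℤ)` for some `N ≥ 1`. -/
def IsCongruenceSubgroup (n : ℕ) (H : Subgroup (Matrix.SpecialLinearGroup (Fin n) ℤ)) : Prop :=
  ∃ N : ℕ, 1 ≤ N ∧ ∀ g : Matrix.SpecialLinearGroup (Fin n) ℤ,
    (∀ i j : Fin n, (N : ℤ) ∣ (g.1 i j - if i = j then 1 else 0)) → g ∈ H

/-- `Γ_k`: the intersection of all congruence subgroups of `SL_n(ℤ)` containing `F(k)`. -/
def GammaCl (n m k : ℕ) (h : m ≤ n) : Subgroup (Matrix.SpecialLinearGroup (Fin n) ℤ) :=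
  sInf {H | IsCongruenceSubgroup n H ∧ Fgroup n m k h ≤ H}

/-!
The Zariski closure in `SL_n` of a subgroup is again a subgroup, because translations and inversion
are polynomial maps. Write `E i j t` for the transvection `1 + t e_{ij}`. For `i`, `j` in different
blocks, `E i j (k z)` lies in `F(k)` for all integers `z`; a polynomial restricted to the line
`t ↦ E i j t` has one variable, so if it vanishes at all multiples of `k` it is zero, and the whole
line lies in the closure. For `i`, `j` in the same block, `E i j t` is the commutator of `E i l t`
and `E l j 1` with `l` in the other block. Over a field the transvections generate `SL_n`.
-/

section Transvections

open scoped commutatorElement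

variable {ι : Type*} [Fintype ι] [DecidableEq ι]

lemma map_transvection {R S : Type*} [CommRing R] [CommRing S] (φ : R →+* S) {i j : ι}
    (hij : i ≠ j) (t : R) :
    SpecialLinearGroup.map φ (SpecialLinearGroup.transvection hij t) =
      SpecialLinearGroup.transvection hij (φ t) := by
  refine Subtype.ext ?_
  simp [SpecialLinearGroup.transvection_coe, Matrix.map_add]

lemma commutatorElement_transvection {R : Type*} [CommRing R] {i j l : ι} (hij : i ≠ j)
    (hil : i ≠ l) (hlj : l ≠ j) (s t : R) :
    ⁅SpecialLinearGroup.transvection hil s, SpecialLinearGroup.transvection hlj t⁆ =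
      SpecialLinearGroup.transvection hij (s * t) := by
  rw [commutatorElement_def, SpecialLinearGroup.transvection_inv,
    SpecialLinearGroup.transvection_inv]
  refine Subtype.ext ?_
  simp only [Matrix.SpecialLinearGroup.coe_mul, SpecialLinearGroup.transvection_coe, mul_add,
    mul_one, add_mul, one_mul, single_mul_single_same, ← single_neg, mul_neg, ne_eq, hil.symm,
    not_false_eq_true, single_mul_single_of_ne, add_zero, hij.symm, hlj.symm, neg_mul]
  abel

lemma transvection_mem_of_cross_transvection_mem {R : Type*} [CommRing R]
    (H : Subgroup (Matrix.SpecialLinearGroup ι R)) {s : Set ι} (hs : s.Nonempty)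
    (hsc : sᶜ.Nonempty)
    (hH : ∀ (i j : ι) (hij : i ≠ j), (i ∈ s ↔ j ∉ s) →
      ∀ t : R, SpecialLinearGroup.transvection hij t ∈ H)
    {i j : ι} (hij : i ≠ j) (t : R) : SpecialLinearGroup.transvection hij t ∈ H := by
  by_cases hcross : i ∈ s ↔ j ∉ s
  · exact hH i j hij hcross t
  obtain ⟨l, hil⟩ : ∃ l, i ∈ s ↔ l ∉ s := by
    by_cases hi : i ∈ s
    · exact hsc.imp fun l hl => iff_of_true hi hl
    · exact hs.imp fun l hl => iff_of_false hi (not_not_intro hl)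
  have hlj : l ∈ s ↔ j ∉ s := by tauto
  have hne_il : i ≠ l := by rintro rfl; tauto
  have hne_lj : l ≠ j := by rintro rfl; tauto
  rw [← mul_one t, ← commutatorElement_transvection hij hne_il hne_lj, commutatorElement_def]
  have hmem_il := hH i l hne_il hil t
  have hmem_lj := hH l j hne_lj hlj 1
  exact mul_mem (mul_mem (mul_mem hmem_il hmem_lj) (inv_mem hmem_il)) (inv_mem hmem_lj)

/- The right-hand side is `w(u) w(-1)` for the monomial matrices
`w(u) = E i j u * E j i (-u⁻¹) * E i j u`, whose `(i, j)` block is `[[0, u], [-u⁻¹, 0]]`. -/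
lemma diag2n_eq_mul_transvection {K : Type*} [Field K] {i j : ι} (hij : i ≠ j) (u : K)
    (hu : u ≠ 0) :
    SpecialLinearGroup.diag2n hij u hu =
      (SpecialLinearGroup.transvection hij u * SpecialLinearGroup.transvection hij.symm (-u⁻¹) *
          SpecialLinearGroup.transvection hij u) *
        (SpecialLinearGroup.transvection hij (-1) * SpecialLinearGroup.transvection hij.symm 1 *
          SpecialLinearGroup.transvection hij (-1)) := by
  ext p q
  simp only [SpecialLinearGroup.diag2n_coe, Matrix.SpecialLinearGroup.coe_mul,
    SpecialLinearGroup.transvection_coe]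
  simp only [diagonal_apply, mul_add, mul_one, add_mul, one_mul, single_mul_single_same, mul_neg,
    ne_eq, hu, not_false_eq_true, mul_inv_cancel₀, hij.symm, single_mul_single_of_ne, add_zero,
    neg_mul, inv_mul_cancel₀, neg_neg, hij, Matrix.add_apply, one_apply, single_apply]
  grind

lemma eq_top_of_transvection_mem {K : Type*} [Field K]
    (H : Subgroup (Matrix.SpecialLinearGroup ι K))
    (hH : ∀ (i j : ι) (hij : i ≠ j) (t : K), SpecialLinearGroup.transvection hij t ∈ H) :
    H = ⊤ := by
  rcases subsingleton_or_nontrivial ι with hι | hι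
  · exact Subsingleton.elim _ _
  refine (Subgroup.eq_top_iff' H).2 fun g =>
    SpecialLinearGroup.diagonal_transvection_induction' (· ∈ H) g (fun i j hij u hu => ?_) hH
      fun _ _ => mul_mem
  rw [diag2n_eq_mul_transvection]
  have weyl_mem (a b : K) : SpecialLinearGroup.transvection hij a *
      SpecialLinearGroup.transvection hij.symm b * SpecialLinearGroup.transvection hij a ∈ H :=
    mul_mem (mul_mem (hH _ _ _ _) (hH _ _ _ _)) (hH _ _ _ _)
  exact mul_mem (weyl_mem _ _) (weyl_mem _ _)

end Transvections

section ZariskiClosure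

variable {ι R : Type*} [Fintype ι] [DecidableEq ι] [CommRing R]

/-- The Zariski closure of a subset of `SL_n(R)`: the points at which every polynomial in the matrix
entries vanishing on the subset vanishes. -/
def zariskiClosure (V : Set (Matrix.SpecialLinearGroup ι R)) :
    Set (Matrix.SpecialLinearGroup ι R) :=
  {g | ∀ f : MvPolynomial (ι × ι) R,
    (∀ h ∈ V, MvPolynomial.eval (fun p => h.1 p.1 p.2) f = 0) →
      MvPolynomial.eval (fun p => g.1 p.1 p.2) f = 0}

lemma subset_zariskiClosure (V : Set (Matrix.SpecialLinearGroup ι R)) : V ⊆ zariskiClosure V :=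
  fun g hg _ hf => hf g hg

lemma mapsTo_zariskiClosure {φ : Matrix.SpecialLinearGroup ι R → Matrix.SpecialLinearGroup ι R}
    (P : Matrix ι ι (MvPolynomial (ι × ι) R))
    (hφ : ∀ g, (φ g).1 = (MvPolynomial.eval fun p => g.1 p.1 p.2).mapMatrix P)
    {V W : Set (Matrix.SpecialLinearGroup ι R)} (hVW : Set.MapsTo φ V (zariskiClosure W)) :
    Set.MapsTo φ (zariskiClosure V) (zariskiClosure W) := by
  intro g hg f hf
  have eval_pullback (h : Matrix.SpecialLinearGroup ι R) :
      MvPolynomial.eval (fun p => h.1 p.1 p.2)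
          (MvPolynomial.bind₁ (fun p : ι × ι => P p.1 p.2) f) =
        MvPolynomial.eval (fun p => (φ h).1 p.1 p.2) f := by
    rw [hφ]
    exact MvPolynomial.aeval_bind₁ _ _ f
  rw [← eval_pullback]
  exact hg _ fun h hh => (eval_pullback h).trans (hVW hh f hf)

lemma mapsTo_mul_left_zariskiClosure (a : Matrix.SpecialLinearGroup ι R)
    {V W : Set (Matrix.SpecialLinearGroup ι R)} (h : Set.MapsTo (a * ·) V (zariskiClosure W)) :
    Set.MapsTo (a * ·) (zariskiClosure V) (zariskiClosure W) :=
  mapsTo_zariskiClosure (MvPolynomial.C.mapMatrix a.1 * mvPolynomialX ι ι R)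
    (fun g => by
      rw [map_mul, mvPolynomialX_mapMatrix_eval]
      ext
      simp [mul_apply]) h

lemma mapsTo_mul_right_zariskiClosure (a : Matrix.SpecialLinearGroup ι R)
    {V W : Set (Matrix.SpecialLinearGroup ι R)} (h : Set.MapsTo (· * a) V (zariskiClosure W)) :
    Set.MapsTo (· * a) (zariskiClosure V) (zariskiClosure W) :=
  mapsTo_zariskiClosure (mvPolynomialX ι ι R * MvPolynomial.C.mapMatrix a.1)
    (fun g => by
      rw [map_mul, mvPolynomialX_mapMatrix_eval]
      ext
      simp [mul_apply]) h

lemma mapsTo_inv_zariskiClosure {V W : Set (Matrix.SpecialLinearGroup ι R)}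
    (h : Set.MapsTo (·⁻¹) V (zariskiClosure W)) :
    Set.MapsTo (·⁻¹) (zariskiClosure V) (zariskiClosure W) :=
  mapsTo_zariskiClosure (mvPolynomialX ι ι R).adjugate
    (fun g => by
      rw [RingHom.map_adjugate, mvPolynomialX_mapMatrix_eval, Matrix.SpecialLinearGroup.coe_inv]) h

/-- The Zariski closure of a subgroup of `SL_n(R)`, as a subgroup. -/
def zariskiClosureSubgroup (H : Subgroup (Matrix.SpecialLinearGroup ι R)) :
    Subgroup (Matrix.SpecialLinearGroup ι R) where
  carrier := zariskiClosure H
  one_mem' := subset_zariskiClosure _ H.one_mem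
  inv_mem' {_} hg :=
    mapsTo_inv_zariskiClosure (fun _ hh => subset_zariskiClosure _ (H.inv_mem hh)) hg
  mul_mem' {g g'} hg hg' := by
    refine mapsTo_mul_right_zariskiClosure g' (fun h hh => ?_) hg
    exact mapsTo_mul_left_zariskiClosure h
      (fun _ hh' => subset_zariskiClosure _ (H.mul_mem hh hh')) hg'

lemma curve_mem_zariskiClosure_of_infinite [IsDomain R] {γ : R → Matrix.SpecialLinearGroup ι R}
    (P : Matrix ι ι (Polynomial R))
    (hγ : ∀ t, (γ t).1 = (Polynomial.evalRingHom t).mapMatrix P)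
    {V : Set (Matrix.SpecialLinearGroup ι R)} {T : Set R} (hT : T.Infinite)
    (hV : Set.MapsTo γ T (zariskiClosure V)) (t : R) : γ t ∈ zariskiClosure V := by
  intro f hf
  have eval_pullback (s : R) :
      (MvPolynomial.aeval (fun p : ι × ι => P p.1 p.2) f).eval s =
        MvPolynomial.eval (fun p => (γ s).1 p.1 p.2) f := by
    rw [hγ]
    exact MvPolynomial.comp_aeval_apply _ (Polynomial.aeval s) f
  have pullback_eq_zero : MvPolynomial.aeval (fun p : ι × ι => P p.1 p.2) f = 0 :=
    Polynomial.eq_zero_of_infinite_isRoot _ <| hT.mono fun s hs =>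
      (eval_pullback s).trans (hV hs f hf)
  rw [← eval_pullback, pullback_eq_zero, Polynomial.eval_zero]

lemma transvection_mem_zariskiClosure_of_infinite [IsDomain R] {i j : ι} (hij : i ≠ j)
    {V : Set (Matrix.SpecialLinearGroup ι R)} {T : Set R} (hT : T.Infinite)
    (hV : ∀ t ∈ T, SpecialLinearGroup.transvection hij t ∈ zariskiClosure V) (t : R) :
    SpecialLinearGroup.transvection hij t ∈ zariskiClosure V :=
  curve_mem_zariskiClosure_of_infinite
    (SpecialLinearGroup.transvection hij (Polynomial.X : Polynomial R)).1
    (fun s => by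
      rw [← SpecialLinearGroup.map_apply_coe, map_transvection, Polynomial.coe_evalRingHom,
        Polynomial.eval_X])
    hT hV t

theorem zariskiClosureSubgroup_eq_top_of_cross_transvection_mem {K : Type*} [Field K]
    (H : Subgroup (Matrix.SpecialLinearGroup ι K)) {s : Set ι} (hs : s.Nonempty)
    (hsc : sᶜ.Nonempty) {T : Set K} (hT : T.Infinite)
    (hH : ∀ (i j : ι) (hij : i ≠ j), (i ∈ s ↔ j ∉ s) →
      ∀ t ∈ T, SpecialLinearGroup.transvection hij t ∈ H) :
    zariskiClosureSubgroup H = ⊤ :=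
  eq_top_of_transvection_mem _ fun _ _ hij t =>
    transvection_mem_of_cross_transvection_mem _ hs hsc
      (fun i j hij hcross => transvection_mem_zariskiClosure_of_infinite hij hT
        fun t ht => subset_zariskiClosure _ (hH i j hij hcross t ht)) hij t

end ZariskiClosure

section Unipotent

variable {n m k : ℕ} {i j : Fin n} {z : ℤ}

lemma transvection_mem_Uplus (hij : i ≠ j) (hi : (i : ℕ) < m) (hj : m ≤ (j : ℕ))
    (hz : (k : ℤ) ∣ z) : SpecialLinearGroup.transvection hij z ∈ Uplus n m k := by
  intro p q
  rw [SpecialLinearGroup.transvection_coe, Matrix.add_apply, one_apply, single_apply]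
  by_cases hpq : i = p ∧ j = q
  · obtain ⟨rfl, rfl⟩ := hpq
    simp [hij, hi, hj, hz]
  · simp only [hpq, if_false, add_zero]
    split_ifs <;> simp

lemma transvection_mem_Uminus (hij : i ≠ j) (hi : m ≤ (i : ℕ)) (hj : (j : ℕ) < m)
    (hz : (k : ℤ) ∣ z) : SpecialLinearGroup.transvection hij z ∈ Uminus n m k := by
  intro p q
  rw [SpecialLinearGroup.transvection_coe, Matrix.add_apply, one_apply, single_apply]
  by_cases hpq : i = p ∧ j = q
  · obtain ⟨rfl, rfl⟩ := hpq
    simp [hij, hi, hj, hz]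
  · simp only [hpq, if_false, add_zero]
    split_ifs <;> simp

lemma transvection_mem_Uplus_union_Uminus (hij : i ≠ j) (hcross : (i : ℕ) < m ↔ ¬(j : ℕ) < m)
    (hz : (k : ℤ) ∣ z) :
    SpecialLinearGroup.transvection hij z ∈ Uplus n m k ∪ Uminus n m k := by
  by_cases hi : (i : ℕ) < m
  · exact Or.inl (transvection_mem_Uplus hij hi (by omega) hz)
  · exact Or.inr (transvection_mem_Uminus hij (by omega) (by omega) hz)

end Unipotent

lemma infinite_range_intCast_mul (R : Type*) [Ring R] [CharZero R] {a : ℤ} (ha : a ≠ 0) :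
    (Set.range fun z : ℤ => ((a * z : ℤ) : R)).Infinite :=
  Set.infinite_range_of_injective <| Int.cast_injective.comp (mul_right_injective₀ ha)

theorem Fgroup_zariski_dense_general {K : Type*} [Field K] [CharZero K] (n m k : ℕ)
    (hm : 1 ≤ m) (hmn : m < n) (hk : 1 ≤ k) (f : MvPolynomial (Fin n × Fin n) K)
    (hf : ∀ g ∈ Subgroup.closure (Uplus n m k ∪ Uminus n m k),
      MvPolynomial.eval (fun p : Fin n × Fin n => ((g.1 p.1 p.2 : ℤ) : K)) f = 0) :
    ∀ g : Matrix.SpecialLinearGroup (Fin n) K,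
      MvPolynomial.eval (fun p : Fin n × Fin n => g.1 p.1 p.2) f = 0 := by
  intro g
  have closure_eq_top : zariskiClosureSubgroup ((Subgroup.closure (Uplus n m k ∪ Uminus n m k)).map
      (SpecialLinearGroup.map (Int.castRingHom K))) = ⊤ := by
    refine zariskiClosureSubgroup_eq_top_of_cross_transvection_mem _
      (s := {i | (i : ℕ) < m}) ⟨⟨0, by omega⟩, hm⟩ ⟨⟨m, hmn⟩, lt_irrefl m⟩
      (infinite_range_intCast_mul K (a := k) (by omega)) ?_
    rintro i j hij hcross _ ⟨z, rfl⟩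
    exact ⟨SpecialLinearGroup.transvection hij (k * z), Subgroup.subset_closure <|
      transvection_mem_Uplus_union_Uminus hij hcross (dvd_mul_right _ z), map_transvection _ _ _⟩
  have hg : g ∈ zariskiClosureSubgroup _ := closure_eq_top ▸ Subgroup.mem_top g
  exact hg f (by rintro _ ⟨h, hh, rfl⟩; exact hf h hh)

/-- For `n ≥ 3`, `1 ≤ m < n`, `k ≥ 1`, the group `F(k)` is Zariski dense in
`SL_n`: every polynomial with rational coefficients in the matrix entries vanishing on
`F(k)` vanishes on all of `SL_n(ℚ)`. -/
theorem Fgroup_zariski_dense (n m k : ℕ)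
    (hn : 3 ≤ n) (hm : 1 ≤ m) (hmn : m < n) (hk : 1 ≤ k)
    (f : MvPolynomial (Fin n × Fin n) ℚ)
    (hf : ∀ g ∈ Fgroup n m k hmn.le,
      MvPolynomial.eval (fun p : Fin n × Fin n => ((g.1 p.1 p.2 : ℤ) : ℚ)) f = 0) :
    ∀ g : Matrix.SpecialLinearGroup (Fin n) ℚ,
      MvPolynomial.eval (fun p : Fin n × Fin n => g.1 p.1 p.2) f = 0 :=
  Fgroup_zariski_dense_general n m k hm hmn hk f fun g hg =>
    hf g (Subgroup.closure_mono Set.subset_union_left hg)
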